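/- For every real x with log x ≥ 20, one has ∫₁^{x/2} (log y)/( y^{3/2 - 1/(2 log x)} · (1 - (log y)/(log x)) ) dy ≤ 5.961. -/

import Mathlib

/-! Put `L = log x` and `a = 1/2 - 1/(2L)`. Substituting `r = a (L - log y)` expresses the integral
through exponential integrals, and multiplying by `exp ((L - 1) / 2) / L ^ 2` leaves them with
constant coefficients. The derivative of the product in `L` is therefore elementary, and for
`L ≥ 20` it is at most that of `5.961 * exp ((L - 1) / 2) / L ^ 2`. So only `L = 20` needs a
numerical estimate; there the exponential integrals are bounded with the Taylor series of `exp`. -/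

open Real Set Filter Topology MeasureTheory

/-- The exponential integral, normalized to vanish at `1`: it equals `Ei z - Ei 1` for `z > 0`. -/
noncomputable def expIntegral (z : ℝ) : ℝ := ∫ r in (1 : ℝ)..z, exp r / r

theorem intervalIntegrable_exp_div {b c : ℝ} (hb : 0 < b) (hc : 0 < c) :
    IntervalIntegrable (fun r => exp r / r) volume b c := by
  refine (continuous_exp.continuousOn.div continuousOn_id fun r hr => ?_).intervalIntegrable
  exact ((lt_min hb hc).trans_le hr.1).ne'

theorem expIntegral_sub_expIntegral {b c : ℝ} (hb : 0 < b) (hc : 0 < c) :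
    expIntegral c - expIntegral b = ∫ r in b..c, exp r / r :=
  intervalIntegral.integral_interval_sub_left (intervalIntegrable_exp_div one_pos hc)
    (intervalIntegrable_exp_div one_pos hb)

theorem hasDerivAt_expIntegral {z : ℝ} (hz : 0 < z) :
    HasDerivAt expIntegral (exp z / z) z := by
  have hcont : ContinuousOn (fun r : ℝ => exp r / r) (Ioi 0) :=
    continuous_exp.continuousOn.div continuousOn_id fun r hr => ne_of_gt hr
  exact intervalIntegral.integral_hasDerivAt_right (intervalIntegrable_exp_div one_pos hz)
    (hcont.stronglyMeasurableAtFilter isOpen_Ioi z hz) (hcont.continuousAt (Ioi_mem_nhds hz))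

theorem exp_le_sum_range_add {r : ℝ} {n : ℕ} (hr : 0 ≤ r) (hrn : r ≤ (n + 1) / 2) :
    exp r ≤ ∑ m ∈ Finset.range n, r ^ m / m.factorial + r ^ n / n.factorial * 2 := by
  have hnorm : ‖(r : ℂ)‖ = r := by rw [Complex.norm_real, norm_of_nonneg hr]
  have hbound := Complex.exp_bound' (x := (r : ℂ)) (n := n) <| by
    rw [hnorm, div_le_iff₀ (by positivity)]
    push_cast
    linarith
  rw [hnorm] at hbound
  have hreal : ‖exp r - ∑ m ∈ Finset.range n, r ^ m / (m.factorial : ℝ)‖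
      ≤ r ^ n / n.factorial * 2 := by
    rw [← Complex.norm_real]
    push_cast
    exact hbound
  linarith [(le_abs_self _).trans hreal]

theorem exp_div_le {r : ℝ} {n : ℕ} (hr : 0 < r) (hrn : r ≤ n / 2 + 1) :
    exp r / r ≤ r⁻¹ + ∑ m ∈ Finset.range n, r ^ m / (m + 1).factorial
      + r ^ n / (n + 1).factorial * 2 := by
  rw [div_le_iff₀ hr]
  refine (exp_le_sum_range_add (n := n + 1) hr.le (by push_cast; linarith)).trans_eq ?_
  rw [Finset.sum_range_succ', add_mul, add_mul, inv_mul_cancel₀ hr.ne', Finset.sum_mul]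
  simp only [pow_succ, pow_zero, Nat.factorial_zero, Nat.cast_one, div_one]
  ring_nf

theorem expIntegral_sub_le {b c : ℝ} {n : ℕ} (hb : 0 < b) (hbc : b ≤ c) (hc : c ≤ n / 2 + 1) :
    expIntegral c - expIntegral b ≤ log (c / b)
      + ∑ m ∈ Finset.range n, (c ^ (m + 1) - b ^ (m + 1)) / ((m + 1) * (m + 1).factorial)
      + 2 * (c ^ (n + 1) - b ^ (n + 1)) / ((n + 1) * (n + 1).factorial) := by
  have hc0 : 0 < c := hb.trans_le hbc
  have hinv : IntervalIntegrable (fun r : ℝ => r⁻¹) volume b c :=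
    intervalIntegral.intervalIntegrable_inv (fun r hr => ((lt_min hb hc0).trans_le hr.1).ne')
      continuousOn_id
  have hsum : IntervalIntegrable
      (fun r : ℝ => ∑ m ∈ Finset.range n, r ^ m / ((m + 1).factorial : ℝ)) volume b c :=
    Continuous.intervalIntegrable (by fun_prop) _ _
  have hlast : IntervalIntegrable
      (fun r : ℝ => r ^ n / ((n + 1).factorial : ℝ) * 2) volume b c :=
    Continuous.intervalIntegrable (by fun_prop) _ _
  calc expIntegral c - expIntegral b = ∫ r in b..c, exp r / r :=
        expIntegral_sub_expIntegral hb hc0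
    _ ≤ ∫ r in b..c, (r⁻¹ + ∑ m ∈ Finset.range n, r ^ m / ((m + 1).factorial : ℝ)
          + r ^ n / ((n + 1).factorial : ℝ) * 2) :=
        intervalIntegral.integral_mono_on hbc (intervalIntegrable_exp_div hb hc0)
          ((hinv.add hsum).add hlast)
          fun r hr => exp_div_le (hb.trans_le hr.1) (hr.2.trans hc)
    _ = _ := by
        rw [intervalIntegral.integral_add (hinv.add hsum) hlast,
          intervalIntegral.integral_add hinv hsum, integral_inv_of_pos hb hc0,
          intervalIntegral.integral_finsetSum
            fun m _ => Continuous.intervalIntegrable (by fun_prop) _ _]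
        simp only [intervalIntegral.integral_mul_const, intervalIntegral.integral_div,
          integral_pow, div_div]
        ring

theorem hasDerivAt_rpow_sub_expIntegral {a L y : ℝ} (ha : 0 < a) (hL : L ≠ 0) (hy : 0 < y)
    (hyL : log y < L) :
    HasDerivAt
      (fun y => L / a * y ^ (-a) - L ^ 2 * exp (-(a * L)) * expIntegral (a * (L - log y)))
      (log y / (y ^ (1 + a) * (1 - log y / L))) y := by
  have hLy : 0 < L - log y := sub_pos.2 hyL
  have hrpow := (hasDerivAt_rpow_const (p := -a) (Or.inl hy.ne')).const_mul (L / a)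
  have hEi := ((hasDerivAt_expIntegral (mul_pos ha hLy)).comp y
    (((hasDerivAt_log hy.ne').const_sub L).const_mul a)).const_mul (L ^ 2 * exp (-(a * L)))
  refine (hrpow.sub hEi).congr_deriv ?_
  have hexp : exp (a * (L - log y)) = exp (a * L) / y ^ a := by
    rw [rpow_def_of_pos hy, ← exp_sub]
    ring_nf
  rw [hexp, exp_neg, rpow_sub_one hy.ne', rpow_neg hy.le, rpow_add hy, rpow_one,
    one_sub_div hL]
  have hya := (rpow_pos_of_pos hy a).ne'
  field_simp
  ring

theorem integral_log_div_rpow_mul {a b L : ℝ} (ha : 0 < a) (hL : 0 < L) (hb : 0 < b)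
    (hbL : log b < L) :
    ∫ y in (1 : ℝ)..b, log y / (y ^ (1 + a) * (1 - log y / L)) =
      L ^ 2 * exp (-(a * L)) * (expIntegral (a * L) - expIntegral (a * (L - log b)))
        - L / a * (1 - b ^ (-a)) := by
  have hpos : ∀ y ∈ uIcc 1 b, 0 < y := fun y hy => (lt_min one_pos hb).trans_le hy.1
  have hlog : ∀ y ∈ uIcc 1 b, log y < L := fun y hy =>
    (log_le_log (hpos y hy) hy.2).trans_lt <| by
      rcases max_choice 1 b with h | h <;> simpa only [h, log_one]
  have hint : IntervalIntegrable (fun y => log y / (y ^ (1 + a) * (1 - log y / L))) volume 1 b := by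
    refine ContinuousOn.intervalIntegrable fun y hy => ContinuousAt.continuousWithinAt ?_
    have hy0 := (hpos y hy).ne'
    have hden : 1 - log y / L ≠ 0 := (sub_pos.2 <| (div_lt_one hL).2 (hlog y hy)).ne'
    exact (continuousAt_log hy0).div ((continuousAt_rpow_const _ _ (Or.inl hy0)).mul
      (continuousAt_const.sub ((continuousAt_log hy0).div_const L)))
      (mul_ne_zero (rpow_pos_of_pos (hpos y hy) _).ne' hden)
  rw [intervalIntegral.integral_eq_sub_of_hasDerivAt (fun y hy =>
    hasDerivAt_rpow_sub_expIntegral ha hL.ne' (hpos y hy) (hlog y hy)) hint]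
  simp only [log_one, sub_zero, one_rpow]
  ring

/-- For `L = log x` and `ℓ = log t`, this is `exp ((L - 1) / 2) / L ^ 2` times the integral of
`log y / (y ^ (3 / 2 - 1 / (2 * L)) * (1 - log y / L))` over `1 ≤ y ≤ x / t`, in closed form. -/
noncomputable def scaledLogIntegral (ℓ L : ℝ) : ℝ :=
  expIntegral ((L - 1) / 2) - expIntegral ((1 / 2 - 1 / (2 * L)) * ℓ)
    - 2 * (exp ((L - 1) / 2) - exp ((1 / 2 - 1 / (2 * L)) * ℓ)) / (L - 1)

theorem integral_eq_scaledLogIntegral {x t : ℝ} (hx₀ : 0 < x) (hx : 1 < log x) (ht : 1 < t) :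
    ∫ y in (1 : ℝ)..(x / t),
        log y / (y ^ ((3 : ℝ) / 2 - 1 / (2 * log x)) * (1 - log y / log x)) =
      log x ^ 2 / exp ((log x - 1) / 2) * scaledLogIntegral (log t) (log x) := by
  have ht₀ : 0 < t := one_pos.trans ht
  have hL : 0 < log x := one_pos.trans hx
  have hlog : log (x / t) = log x - log t := log_div hx₀.ne' ht₀.ne'
  unfold scaledLogIntegral
  obtain ⟨a, ha⟩ : ∃ a, a = 1 / 2 - 1 / (2 * log x) := ⟨_, rfl⟩
  have haL : (log x - 1) / 2 = a * log x := by rw [ha]; field_simp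
  have ha₀ : 0 < a := pos_of_mul_pos_left (haL ▸ half_pos (sub_pos.2 hx)) hL.le
  have hpow : (x / t) ^ (-a) = exp (a * log t) / exp (a * log x) := by
    rw [rpow_def_of_pos (div_pos hx₀ ht₀), hlog, ← exp_sub]
    ring_nf
  rw [show (3 : ℝ) / 2 - 1 / (2 * log x) = 1 + a by rw [ha]; ring,
    integral_log_div_rpow_mul ha₀ hL (div_pos hx₀ ht₀) (by linarith [log_pos ht]), hpow, hlog,
    sub_sub_cancel, ← ha, haL, show log x - 1 = 2 * (a * log x) by linarith, exp_neg]
  field_simp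

theorem hasDerivAt_scaledLogIntegral {ℓ L : ℝ} (hℓ : 0 < ℓ) (hL : 1 < L) :
    HasDerivAt (scaledLogIntegral ℓ)
      (2 * exp ((L - 1) / 2) / (L - 1) ^ 2
        - exp ((1 / 2 - 1 / (2 * L)) * ℓ) *
          ((L - ℓ) / (L ^ 2 * (L - 1)) + 2 / (L - 1) ^ 2)) L := by
  have hL₀ : L ≠ 0 := (one_pos.trans hL).ne'
  have hL₁ : 0 < L - 1 := sub_pos.2 hL
  have ha : 1 / 2 - 1 / (2 * L) = (L - 1) / (2 * L) := by field_simp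
  have hlower_pos : 0 < (1 / 2 - 1 / (2 * L)) * ℓ := by rw [ha]; positivity
  have hupper : HasDerivAt (fun L : ℝ => (L - 1) / 2) (1 / 2) L :=
    ((hasDerivAt_id L).sub_const 1).div_const 2
  have hlower : HasDerivAt (fun L : ℝ => (1 / 2 - 1 / (2 * L)) * ℓ) (1 / (2 * L ^ 2) * ℓ) L := by
    have hden : HasDerivAt (fun L : ℝ => 2 * L) (2 * 1) L := (hasDerivAt_id L).const_mul 2
    refine ((((hasDerivAt_const L (1 : ℝ)).div hden (by positivity)).const_sub
      (1 / 2)).mul_const ℓ).congr_deriv ?_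
    field_simp
    ring
  have hEi_upper := (hasDerivAt_expIntegral (half_pos hL₁)).comp L hupper
  have hEi_lower := (hasDerivAt_expIntegral hlower_pos).comp L hlower
  have hquot := ((hupper.exp.sub hlower.exp).const_mul 2).div
    ((hasDerivAt_id L).sub_const 1) hL₁.ne'
  refine ((hEi_upper.sub hEi_lower).sub hquot).congr_deriv ?_
  simp only [Pi.sub_apply, id]
  generalize exp ((L - 1) / 2) = A
  generalize exp ((1 / 2 - 1 / (2 * L)) * ℓ) = B
  rw [ha]
  field_simp
  ring

theorem hasDerivAt_exp_half_div_sq {L : ℝ} (hL : L ≠ 0) :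
    HasDerivAt (fun L => exp ((L - 1) / 2) / L ^ 2)
      (exp ((L - 1) / 2) * (L - 4) / (2 * L ^ 3)) L := by
  have hexp := (((hasDerivAt_id L).sub_const 1).div_const 2).exp
  refine (hexp.div (hasDerivAt_pow 2 L) (by positivity)).congr_deriv ?_
  simp only [id]
  field_simp
  ring

-- This is `2 / (L - 1) ^ 2 ≤ C * (L - 4) / (2 * L ^ 3)`, which compares the two derivatives above
-- after division by `exp ((L - 1) / 2)`.
theorem four_mul_pow_three_le_of_le {C L₀ L : ℝ} (hL₀ : 4 < L₀)
    (hC : 4 * L₀ ^ 3 ≤ C * (L₀ - 4) * (L₀ - 1) ^ 2) (hL : L₀ ≤ L) :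
    4 * L ^ 3 ≤ C * (L - 4) * (L - 1) ^ 2 := by
  have hC₀ : 0 ≤ C := by
    by_contra! h
    have : 0 < L₀ ^ 3 := by positivity
    have : C * (L₀ - 4) * (L₀ - 1) ^ 2 ≤ 0 :=
      mul_nonpos_of_nonpos_of_nonneg (by nlinarith) (sq_nonneg _)
    linarith
  have h₄ : L * (L₀ - 4) ≤ L₀ * (L - 4) := by linarith
  have h₁ : L * (L₀ - 1) ≤ L₀ * (L - 1) := by linarith
  have hL₀_pos : 0 < L₀ ^ 3 := by positivity
  refine le_of_mul_le_mul_left ?_ hL₀_pos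
  calc L₀ ^ 3 * (4 * L ^ 3) = L ^ 3 * (4 * L₀ ^ 3) := by ring
    _ ≤ L ^ 3 * (C * (L₀ - 4) * (L₀ - 1) ^ 2) :=
        mul_le_mul_of_nonneg_left hC (pow_nonneg (by linarith) 3)
    _ = C * (L * (L₀ - 4)) * (L * (L₀ - 1)) ^ 2 := by ring
    _ ≤ C * (L₀ * (L - 4)) * (L₀ * (L - 1)) ^ 2 := by
        have : 0 ≤ L - 4 := by linarith
        have : 0 ≤ L * (L₀ - 1) := mul_nonneg (by linarith) (by linarith)
        gcongr
    _ = L₀ ^ 3 * (C * (L - 4) * (L - 1) ^ 2) := by ring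

theorem scaledLogIntegral_le_of_le {C ℓ L₀ L : ℝ} (hℓ : 0 < ℓ) (hℓL₀ : ℓ ≤ L₀) (hL₀ : 4 < L₀)
    (hC : 4 * L₀ ^ 3 ≤ C * (L₀ - 4) * (L₀ - 1) ^ 2)
    (hle : scaledLogIntegral ℓ L₀ ≤ C * (exp ((L₀ - 1) / 2) / L₀ ^ 2)) (hL : L₀ ≤ L) :
    scaledLogIntegral ℓ L ≤ C * (exp ((L - 1) / 2) / L ^ 2) := by
  have hderiv : ∀ z ∈ Icc L₀ L, HasDerivAt (scaledLogIntegral ℓ) _ z := fun z hz =>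
    hasDerivAt_scaledLogIntegral hℓ (by linarith [hz.1])
  have hderivC : ∀ z ∈ Icc L₀ L, HasDerivAt (fun z => C * (exp ((z - 1) / 2) / z ^ 2)) _ z :=
    fun z hz => (hasDerivAt_exp_half_div_sq (by linarith [hz.1])).const_mul C
  refine image_le_of_deriv_right_le_deriv_boundary
    (fun z hz => (hderiv z hz).continuousAt.continuousWithinAt)
    (fun z hz => (hderiv z (Ico_subset_Icc_self hz)).hasDerivWithinAt) hle
    (fun z hz => (hderivC z hz).continuousAt.continuousWithinAt)
    (fun z hz => (hderivC z (Ico_subset_Icc_self hz)).hasDerivWithinAt)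
    (fun z hz => ?_) (right_mem_Icc.2 hL)
  have hz₁ : 0 < z - 1 := by linarith [hz.1]
  have hz₀ : 0 < z := by linarith
  have hzℓ : 0 ≤ z - ℓ := by linarith [hz.1]
  -- The contribution of the lower limit is negative and can be dropped.
  calc _ ≤ 2 * exp ((z - 1) / 2) / (z - 1) ^ 2 := sub_le_self _ (by positivity)
    _ ≤ exp ((z - 1) / 2) * (C * (z - 4)) / (2 * z ^ 3) := by
        rw [div_le_div_iff₀ (by positivity) (by positivity)]
        have := mul_le_mul_of_nonneg_left (four_mul_pow_three_le_of_le hL₀ hC hz.1)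
          (exp_pos ((z - 1) / 2)).le
        linarith
    _ = C * (exp ((z - 1) / 2) * (z - 4) / (2 * z ^ 3)) := by ring

theorem log_twenty_div_log_two_le : log (20 / log 2) ≤ 3.365 := by
  have hlog2 := log_two_gt_d9
  have hexp : (28.9 : ℝ) ≤ exp 3.365 := by
    refine le_trans ?_ (sum_le_exp_of_nonneg (by norm_num) 20)
    norm_num [Finset.sum_range_succ, Nat.factorial]
  rw [log_le_iff_le_exp (by positivity)]
  refine le_trans ?_ hexp
  rw [div_le_iff₀ (by positivity)]
  linarith

theorem add_sq_div_four_le_sum_range {b : ℝ} {n : ℕ} (hb : 0 ≤ b) (hn : 2 ≤ n) :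
    b + b ^ 2 / 4 ≤
      ∑ m ∈ Finset.range n, b ^ (m + 1) / ((m + 1 : ℝ) * ((m + 1).factorial : ℝ)) :=
  calc b + b ^ 2 / 4
      = ∑ m ∈ Finset.range 2, b ^ (m + 1) / ((m + 1 : ℝ) * ((m + 1).factorial : ℝ)) := by
        norm_num [Finset.sum_range_succ, Nat.factorial]
    _ ≤ _ := Finset.sum_le_sum_of_subset_of_nonneg (Finset.range_subset_range.2 hn)
        fun m _ _ => by positivity

theorem expIntegral_sub_expIntegral_log_two_le :
    expIntegral (19 / 2) - expIntegral (19 / 40 * log 2) ≤ 1605.211 := by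
  have hratio : (19 / 2 : ℝ) / (19 / 40 * log 2) = 20 / log 2 := by field_simp; norm_num
  have hb : 0.3292 ≤ 19 / 40 * log 2 := by linarith [log_two_gt_d9]
  have h := expIntegral_sub_le (n := 29) (b := 19 / 40 * log 2) (c := 19 / 2) (by positivity)
    (by linarith [log_two_lt_d9]) (by norm_num)
  rw [hratio] at h
  have hlog := log_twenty_div_log_two_le
  generalize 19 / 40 * log 2 = b at h hb ⊢
  simp only [sub_div, mul_sub, Finset.sum_sub_distrib] at h
  have hb₀ : 0 ≤ b := by linarith
  have hb_sum := add_sq_div_four_le_sum_range (n := 29) hb₀ (by norm_num)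
  have hb_sq : 0.3292 ^ 2 ≤ b ^ 2 := by gcongr
  have hb_last : 0 ≤ 2 * b ^ (29 + 1) / (((29 : ℕ) + 1) * ((29 + 1).factorial : ℝ)) := by
    positivity
  have hc_sum : ∑ m ∈ Finset.range 29, (19 / 2 : ℝ) ^ (m + 1) / ((m + 1) * (m + 1).factorial)
      + 2 * (19 / 2) ^ (29 + 1) / (((29 : ℕ) + 1) * ((29 + 1).factorial : ℝ)) ≤ 1602.201 := by
    norm_num [Finset.sum_range_succ, Nat.factorial]
  linarith [hc_sum]

theorem scaledLogIntegral_log_two_twenty_le :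
    scaledLogIntegral (log 2) 20 ≤ 5.961 * (exp ((20 - 1) / 2) / 20 ^ 2) := by
  have hEi := expIntegral_sub_expIntegral_log_two_le
  have hexp : (13359.7 : ℝ) ≤ exp (19 / 2) := by
    refine le_trans ?_ (sum_le_exp_of_nonneg (by norm_num) 40)
    norm_num [Finset.sum_range_succ, Nat.factorial]
  have hsqrt : exp (19 / 40 * log 2) ≤ 1.4143 := by
    rw [← le_log_iff_exp_le (by norm_num)]
    have : log 2 ≤ 2 * log 1.4143 := by
      rw [← log_rpow (by norm_num)]
      exact log_le_log (by norm_num) (by norm_num)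
    linarith [log_two_gt_d9]
  rw [scaledLogIntegral, show ((20 : ℝ) - 1) / 2 = 19 / 2 by norm_num,
    show (1 : ℝ) / 2 - 1 / (2 * 20) = 19 / 40 by norm_num]
  linarith

theorem inv_isBigO_log_div_rpow_mul {s L : ℝ} (hs : 1 ≤ s) (hL : 0 < L) :
    (fun y : ℝ => y⁻¹) =O[𝓝[>] 0] fun y => log y / (y ^ s * (1 - log y / L)) := by
  refine Asymptotics.IsBigO.of_bound (2 / L) ?_
  filter_upwards [Ioo_mem_nhdsGT (exp_pos (-L))] with y hy
  have hy₁ : y ≤ 1 := hy.2.le.trans (exp_le_one_iff.2 (by linarith))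
  have hlog : log y < -L := (log_lt_iff_lt_exp hy.1).2 hy.2
  have hden : 0 < 1 - log y / L := sub_pos.2 <| (div_lt_one hL).2 (by linarith)
  have hden_le : 1 - log y / L ≤ 2 / L * -log y := by
    rw [one_sub_div hL.ne', div_mul_eq_mul_div]
    gcongr
    linarith
  have hpow : 0 < y ^ s := rpow_pos_of_pos hy.1 s
  have hpow_le : y ^ s ≤ y := by
    simpa only [rpow_one] using rpow_le_rpow_of_exponent_ge hy.1 hy₁ hs
  rw [norm_of_nonneg (inv_nonneg.2 hy.1.le), norm_div, norm_of_nonpos (by linarith),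
    norm_of_nonneg (by positivity), ← mul_div_assoc, inv_eq_one_div,
    div_le_div_iff₀ hy.1 (by positivity), one_mul]
  calc y ^ s * (1 - log y / L) ≤ y * (2 / L * -log y) :=
        mul_le_mul hpow_le hden_le hden.le hy.1.le
    _ = 2 / L * -log y * y := mul_comm _ _

theorem not_intervalIntegrable_log_div_rpow_mul {s L b c : ℝ} (hs : 1 ≤ s) (hL : 0 < L)
    (hb : 0 < b) (hc : c ≤ 0) :
    ¬IntervalIntegrable (fun y => log y / (y ^ s * (1 - log y / L))) volume b c := by
  refine not_intervalIntegrable_of_tendsto_norm_atTop_of_deriv_isBigO_filter (𝓝[>] 0) ?_ ?_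
    (tendsto_abs_atBot_atTop.comp tendsto_log_nhdsGT_zero)
    (deriv_log' ▸ inv_isBigO_log_div_rpow_mul hs hL)
  · rw [uIcc_of_ge (hc.trans hb.le)]
    exact mem_of_superset (Ioc_mem_nhdsGT hb) fun y hy => ⟨hc.trans hy.1.le, hy.2⟩
  · filter_upwards [self_mem_nhdsWithin] with y hy using differentiableAt_log (ne_of_gt hy)

/-- For every real `x` with `log x ≥ 20`,
`∫₁^{x/2} (log y)/(y^{3/2 - 1/(2 log x)}(1 - log y/log x)) dy ≤ 5.961`. -/
theorem integral_log_bound (x : ℝ) (hx : 20 ≤ Real.log x) :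
    ∫ y in (1 : ℝ)..(x / 2),
        Real.log y /
          (y ^ ((3 : ℝ) / 2 - 1 / (2 * Real.log x)) * (1 - Real.log y / Real.log x)) ≤
      5.961 := by
  have hL : 0 < log x := by linarith
  rcases le_or_gt x 0 with hx₀ | hx₀
  · -- `Real.log x` is `log |x|`, so `x < 0` is allowed; the integral then diverges at `0`,
    -- and Lean's value for it is `0`.
    have hs : 1 ≤ (3 : ℝ) / 2 - 1 / (2 * log x) := by
      have : 1 / (2 * log x) ≤ 1 / 2 := one_div_le_one_div_of_le two_pos (by linarith)
      linarith
    rw [intervalIntegral.integral_undef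
      (not_intervalIntegrable_log_div_rpow_mul hs hL one_pos (by linarith))]
    norm_num
  · have hbound := scaledLogIntegral_le_of_le (log_pos one_lt_two) (by linarith [log_two_lt_d9])
      (by norm_num) (by norm_num) scaledLogIntegral_log_two_twenty_le hx
    rw [integral_eq_scaledLogIntegral hx₀ (by linarith) one_lt_two]
    calc log x ^ 2 / exp ((log x - 1) / 2) * scaledLogIntegral (log 2) (log x)
        ≤ log x ^ 2 / exp ((log x - 1) / 2) * (5.961 * (exp ((log x - 1) / 2) / log x ^ 2)) :=
          mul_le_mul_of_nonneg_left hbound (by positivity)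
      _ = 5.961 := by field_simp
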